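/- The function τ₁(c) = (3−c)/(4c·(log c)²) − 1/(2c(c−1)·log c) is concave on (0,1) and on (1,∞). -/

import Mathlib

noncomputable def tau1 (c : ℝ) : ℝ :=
  (3 - c) / (4 * c * (Real.log c) ^ 2) - 1 / (2 * c * (c - 1) * Real.log c)

/-!
With `t = log c`, the numerator of `-τ₁''` is an exponential polynomial `f(t) = ∑ₖ pₖ(t) eᵏᵗ`. If
`f(0) ≥ 0` and `f' - m f ≥ 0` on `[0, ∞)`, then `f ≥ 0` there, since `e⁻ᵐᵗ f` is increasing. So `f`
may be replaced by `f' - m f`, in which the degree of `pₘ` has dropped. Here `f` vanishes to order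
seven at `0`, so that the first seven replacements cost nothing, and with suitable exponents `m`
they leave only nonnegative coefficients. For `c < 1`, where `t = -log c`, eight replacements do.
-/

theorem nonneg_of_mul_le_deriv {f f' : ℝ → ℝ} {a m : ℝ} (hf : ∀ s, a ≤ s → HasDerivAt f (f' s) s)
    (ha : 0 ≤ f a) (hle : ∀ s, a ≤ s → m * f s ≤ f' s) {t : ℝ} (ht : a ≤ t) : 0 ≤ f t := by
  have hderiv (s : ℝ) (hs : a ≤ s) : HasDerivAt (fun s ↦ Real.exp (-m * s) * f s)
      (Real.exp (-m * s) * (f' s - m * f s)) s := by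
    refine (((hasDerivAt_id s).const_mul (-m)).exp.mul (hf s hs)).congr_deriv ?_
    simp only [id, mul_one]
    ring
  have hmono : MonotoneOn (fun s ↦ Real.exp (-m * s) * f s) (Set.Ici a) := by
    refine monotoneOn_of_hasDerivWithinAt_nonneg (convex_Ici a)
      (fun s hs ↦ (hderiv s hs).continuousAt.continuousWithinAt)
      (fun s hs ↦ (hderiv s (interior_subset hs)).hasDerivWithinAt) fun s hs ↦ ?_
    exact mul_nonneg (Real.exp_pos _).le (sub_nonneg.2 (hle s (interior_subset hs)))
  have hexp_mul : 0 ≤ Real.exp (-m * t) * f t :=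
    (mul_nonneg (Real.exp_pos _).le ha).trans (hmono Set.self_mem_Ici ht ht)
  exact nonneg_of_mul_nonneg_right hexp_mul (Real.exp_pos _)

theorem hasDerivAt_exp_zpow (k : ℤ) (t : ℝ) :
    HasDerivAt (fun t ↦ Real.exp t ^ k) (k * Real.exp t ^ k) t := by
  refine ((hasDerivAt_zpow k _ (.inl (Real.exp_ne_zero t))).comp t
    (Real.hasDerivAt_exp t)).congr_deriv ?_
  rw [mul_assoc, ← zpow_add_one₀ (Real.exp_ne_zero t), sub_add_cancel]

/-- Integer polynomials in one real variable, as lists of coefficients starting with the constant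
one. Unlike `Polynomial`, they can be computed with by `decide`. Trailing zeros are allowed. -/
abbrev CoeffList := List ℤ

namespace CoeffList

/-- The value of a polynomial at `t`, by Horner's rule. -/
def eval : CoeffList → ℝ → ℝ
  | [], _ => 0
  | a :: p, t => a + t * eval p t

/-- The sum of two polynomials, the shorter list being padded with zeros. -/
def add : CoeffList → CoeffList → CoeffList
  | [], q => q
  | p, [] => p
  | a :: p, b :: q => (a + b) :: add p q

/-- The polynomial `p' + k p`, which is the coefficient of `eᵏᵗ` in the derivative of `p(t) eᵏᵗ`. -/
def derivAddMul (k : ℤ) : CoeffList → CoeffList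
  | [] => []
  | a :: p => add p ((k * a) :: derivAddMul k p)

theorem eval_add (p q : CoeffList) (t : ℝ) : eval (add p q) t = eval p t + eval q t := by
  induction p, q using add.induct with
  | case1 q => simp [add, eval]
  | case2 p hp => cases p <;> simp [add, eval]
  | case3 a p b q ih =>
    simp only [add, eval, ih]
    push_cast
    ring

theorem hasDerivAt_eval (k : ℤ) (p : CoeffList) (t : ℝ) :
    HasDerivAt (eval p) (eval (derivAddMul k p) t - k * eval p t) t := by
  induction p with
  | nil => simpa [derivAddMul, eval] using hasDerivAt_const t (0 : ℝ)
  | cons a p ih =>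
    refine (((hasDerivAt_id t).mul ih).const_add (a : ℝ)).congr_deriv ?_
    simp only [derivAddMul, eval_add, eval, id]
    push_cast
    ring

theorem eval_zero (p : CoeffList) : eval p 0 = (p.headD 0 : ℤ) := by
  cases p <;> simp [eval]

theorem eval_nonneg {p : CoeffList} (hp : ∀ a ∈ p, 0 ≤ a) {t : ℝ} (ht : 0 ≤ t) :
    0 ≤ eval p t := by
  induction p with
  | nil => exact le_rfl
  | cons a p ih =>
    obtain ⟨ha, hp⟩ := List.forall_mem_cons.1 hp
    exact add_nonneg (Int.cast_nonneg ha) (mul_nonneg ht (ih hp))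

end CoeffList

/-- Exponential polynomials `∑ p(t) eᵏᵗ`, as lists of pairs `(k, p)`. -/
abbrev ExpPoly := List (ℤ × CoeffList)

namespace ExpPoly

/-- The value of an exponential polynomial at `t`. -/
noncomputable def eval (f : ExpPoly) (t : ℝ) : ℝ :=
  (f.map fun (k, p) ↦ p.eval t * Real.exp t ^ k).sum

/-- The value of an exponential polynomial at `0`, as an integer. -/
def evalZero (f : ExpPoly) : ℤ :=
  (f.map fun (_, p) ↦ p.headD 0).sum

/-- The exponential polynomial `f' - m f`. -/
def derivSubMul (m : ℤ) (f : ExpPoly) : ExpPoly :=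
  f.map fun (k, p) ↦ (k, p.derivAddMul (k - m))

/-- A computable sufficient condition for `f ≥ 0` on `[0, ∞)`: apply the operators `d/dt - m` to
`f`, for `m` in the given list, in this order. The value at `0` must be nonnegative before each of
them, and all coefficients must be nonnegative in the end. -/
def nonnegCheck : List ℤ → ExpPoly → Bool
  | [], f => f.all fun (_, p) ↦ p.all (0 ≤ ·)
  | m :: ms, f => 0 ≤ f.evalZero && nonnegCheck ms (f.derivSubMul m)

theorem eval_zero (f : ExpPoly) : f.eval 0 = f.evalZero := by
  simp [eval, evalZero, CoeffList.eval_zero, Function.comp_def]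

theorem hasDerivAt_eval (m : ℤ) (f : ExpPoly) (t : ℝ) :
    HasDerivAt f.eval ((f.derivSubMul m).eval t + m * f.eval t) t := by
  induction f with
  | nil => exact (hasDerivAt_const t (0 : ℝ)).congr_deriv (by simp [derivSubMul, eval])
  | cons term f ih =>
    obtain ⟨k, p⟩ := term
    have hterm := (p.hasDerivAt_eval (k - m) t).mul (hasDerivAt_exp_zpow k t)
    refine (hterm.add ih).congr_deriv ?_
    simp only [derivSubMul, eval, List.map_cons, List.sum_cons]
    push_cast
    ring

theorem eval_nonneg_of_coeff_nonneg {f : ExpPoly} (hf : ∀ kp ∈ f, ∀ a ∈ kp.2, 0 ≤ a) {t : ℝ}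
    (ht : 0 ≤ t) : 0 ≤ f.eval t := by
  refine List.sum_nonneg (List.forall_mem_map.2 fun kp hkp ↦ ?_)
  exact mul_nonneg (CoeffList.eval_nonneg (hf kp hkp) ht) (zpow_nonneg (Real.exp_pos t).le _)

theorem eval_nonneg_of_nonnegCheck (ms : List ℤ) {f : ExpPoly} (hf : nonnegCheck ms f) {t : ℝ}
    (ht : 0 ≤ t) : 0 ≤ f.eval t := by
  induction ms generalizing f t with
  | nil =>
    refine eval_nonneg_of_coeff_nonneg ?_ ht
    simpa [nonnegCheck] using hf
  | cons m ms ih =>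
    obtain ⟨hzero, hderiv⟩ : 0 ≤ f.evalZero ∧ nonnegCheck ms (f.derivSubMul m) := by
      simpa [nonnegCheck] using hf
    refine nonneg_of_mul_le_deriv (m := m) (fun s _ ↦ f.hasDerivAt_eval m s) ?_ (fun s hs ↦ ?_) ht
    · exact f.eval_zero ▸ Int.cast_nonneg hzero
    · exact le_add_of_nonneg_left (ih hderiv hs)

end ExpPoly

/-- The first derivative of `tau1` on `(0, 1) ∪ (1, ∞)`. -/
noncomputable def tau1Deriv (c : ℝ) : ℝ :=
  -3 / (4 * c ^ 2 * Real.log c ^ 2) + (c - 3) / (2 * c ^ 2 * Real.log c ^ 3)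
    + (2 * c - 1) / (2 * c ^ 2 * (c - 1) ^ 2 * Real.log c)
    + 1 / (2 * c ^ 2 * (c - 1) * Real.log c ^ 2)

/-- The numerator of `-τ₁''` over the denominator `2 c³ (log c)⁴ (c - 1)³`. -/
noncomputable def tau1NegDeriv2Num (c : ℝ) : ℝ :=
  (6 * c ^ 2 - 6 * c + 2) * Real.log c ^ 3
    - (3 * c ^ 3 - 14 * c ^ 2 + 17 * c - 6) * Real.log c ^ 2
    + (c ^ 4 - 12 * c ^ 3 + 32 * c ^ 2 - 32 * c + 11) * Real.log c
    + (3 * c ^ 4 - 18 * c ^ 3 + 36 * c ^ 2 - 30 * c + 9)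

/-- The second derivative of `tau1` on `(0, 1) ∪ (1, ∞)`. -/
noncomputable def tau1Deriv2 (c : ℝ) : ℝ :=
  -tau1NegDeriv2Num c / (2 * c ^ 3 * Real.log c ^ 4 * (c - 1) ^ 3)

theorem hasDerivAt_tau1 {c : ℝ} (hc : 0 < c) (hc1 : c ≠ 1) :
    HasDerivAt tau1 (tau1Deriv c) c := by
  have hlog : Real.log c ≠ 0 := Real.log_ne_zero_of_pos_of_ne_one hc hc1
  have hsub : c - 1 ≠ 0 := sub_ne_zero.2 hc1
  have hid := hasDerivAt_id c
  have hdlog := Real.hasDerivAt_log hc.ne'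
  have hfst := (hid.const_sub 3).div ((hid.const_mul 4).mul (hdlog.pow 2))
    (by simp [hc.ne', hlog])
  have hsnd := (hasDerivAt_const c (1 : ℝ)).div
    (((hid.const_mul 2).mul (hid.sub_const 1)).mul hdlog) (by simp [hc.ne', hlog, hsub])
  refine (hfst.sub hsnd).congr_deriv ?_
  simp only [tau1Deriv, id, Pi.mul_apply, Pi.pow_apply]
  push_cast
  field_simp
  ring

theorem hasDerivAt_tau1Deriv {c : ℝ} (hc : 0 < c) (hc1 : c ≠ 1) :
    HasDerivAt tau1Deriv (tau1Deriv2 c) c := by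
  have hlog : Real.log c ≠ 0 := Real.log_ne_zero_of_pos_of_ne_one hc hc1
  have hsub : c - 1 ≠ 0 := sub_ne_zero.2 hc1
  have hid := hasDerivAt_id c
  have hdlog := Real.hasDerivAt_log hc.ne'
  have hsq := (hid.pow 2).const_mul 2
  have hterm₁ := (hasDerivAt_const c (-3 : ℝ)).div (((hid.pow 2).const_mul 4).mul (hdlog.pow 2))
    (by simp [hc.ne', hlog])
  have hterm₂ := (hid.sub_const 3).div (hsq.mul (hdlog.pow 3)) (by simp [hc.ne', hlog])
  have hterm₃ := ((hid.const_mul 2).sub_const 1).div ((hsq.mul ((hid.sub_const 1).pow 2)).mul hdlog)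
    (by simp [hc.ne', hlog, hsub])
  have hterm₄ := (hasDerivAt_const c (1 : ℝ)).div ((hsq.mul (hid.sub_const 1)).mul (hdlog.pow 2))
    (by simp [hc.ne', hlog, hsub])
  refine (((hterm₁.add hterm₂).add hterm₃).add hterm₄).congr_deriv ?_
  simp only [tau1Deriv2, tau1NegDeriv2Num, id, Pi.mul_apply, Pi.pow_apply]
  push_cast
  field_simp
  ring

theorem tau1NegDeriv2Num_nonneg {c : ℝ} (hc : 1 ≤ c) : 0 ≤ tau1NegDeriv2Num c := by
  let f : ExpPoly := [(0, [9, 11, 6, 2]), (1, [-30, -32, -17, -6]), (2, [36, 32, 14, 6]),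
    (3, [-18, -12, -3]), (4, [3, 1])]
  have hf : 0 ≤ f.eval (Real.log c) :=
    ExpPoly.eval_nonneg_of_nonnegCheck [0, 0, 0, 1, 2, 3, 4] (by decide) (Real.log_nonneg hc)
  have heval : f.eval (Real.log c) = tau1NegDeriv2Num c := by
    simp only [f, ExpPoly.eval, CoeffList.eval, List.map_cons, List.map_nil, List.sum_cons,
      List.sum_nil, Real.exp_log (zero_lt_one.trans_le hc), zpow_ofNat, tau1NegDeriv2Num]
    push_cast
    ring
  exact heval ▸ hf

theorem tau1NegDeriv2Num_nonpos {c : ℝ} (hc0 : 0 < c) (hc1 : c ≤ 1) : tau1NegDeriv2Num c ≤ 0 := by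
  let f : ExpPoly := [(-4, [-3, 1]), (-3, [18, -12, 3]), (-2, [-36, 32, -14, 6]),
    (-1, [30, -32, 17, -6]), (0, [-9, 11, -6, 2])]
  have hf : 0 ≤ f.eval (-Real.log c) :=
    ExpPoly.eval_nonneg_of_nonnegCheck [-4, -4, -3, -3, -2, -2, -1, 0] (by decide)
      (neg_nonneg.2 (Real.log_nonpos hc0.le hc1))
  have heval : f.eval (-Real.log c) = -tau1NegDeriv2Num c := by
    simp only [f, ExpPoly.eval, CoeffList.eval, List.map_cons, List.map_nil, List.sum_cons,
      List.sum_nil, Real.exp_neg, Real.exp_log hc0, inv_zpow', neg_neg, neg_zero,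
      zpow_ofNat, tau1NegDeriv2Num]
    push_cast
    ring
  exact neg_nonneg.1 (heval ▸ hf)

theorem tau1Deriv2_nonpos {c : ℝ} (hc : 0 < c) : tau1Deriv2 c ≤ 0 := by
  rcases le_total c 1 with hc1 | hc1
  · have hcube : (c - 1) ^ 3 ≤ 0 := Odd.pow_nonpos (by decide) (sub_nonpos.2 hc1)
    exact div_nonpos_of_nonneg_of_nonpos (neg_nonneg.2 (tau1NegDeriv2Num_nonpos hc hc1))
      (mul_nonpos_of_nonneg_of_nonpos (by positivity) hcube)
  · have hcube : 0 ≤ (c - 1) ^ 3 := pow_nonneg (sub_nonneg.2 hc1) 3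
    exact div_nonpos_of_nonpos_of_nonneg (neg_nonpos.2 (tau1NegDeriv2Num_nonneg hc1))
      (mul_nonneg (by positivity) hcube)

theorem concaveOn_tau1 {s : Set ℝ} (hs : Convex ℝ s) (hpos : ∀ c ∈ s, 0 < c) (hne : 1 ∉ s) :
    ConcaveOn ℝ s tau1 := by
  have hne_one {c : ℝ} (hc : c ∈ s) : c ≠ 1 := ne_of_mem_of_not_mem hc hne
  have hderiv (c : ℝ) (hc : c ∈ s) := hasDerivAt_tau1 (hpos c hc) (hne_one hc)
  have hderiv2 (c : ℝ) (hc : c ∈ s) := hasDerivAt_tau1Deriv (hpos c hc) (hne_one hc)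
  exact concaveOn_of_hasDerivWithinAt2_nonpos hs
    (fun c hc ↦ (hderiv c hc).continuousAt.continuousWithinAt)
    (fun c hc ↦ (hderiv c (interior_subset hc)).hasDerivWithinAt)
    (fun c hc ↦ (hderiv2 c (interior_subset hc)).hasDerivWithinAt)
    fun c hc ↦ tau1Deriv2_nonpos (hpos c (interior_subset hc))

theorem stmt_9 :
    ConcaveOn ℝ (Set.Ioo (0:ℝ) 1) tau1 ∧ ConcaveOn ℝ (Set.Ioi (1:ℝ)) tau1 :=
  ⟨concaveOn_tau1 (convex_Ioo 0 1) (fun _ hc ↦ hc.1) Set.right_notMem_Ioo,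
    concaveOn_tau1 (convex_Ioi 1) (fun _ hc ↦ zero_lt_one.trans hc) Set.self_notMem_Ioi⟩
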